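/- Let n : ℕ, let A and T be sets of elements of the free group Fₙ on generators x₁,…,xₙ with T infinite, and for each subset Z ⊆ T let G_Z denote the presented group Fₙ/⟨⟨A ∪ Z⟩⟩. Assume that for every Z ⊆ T and every r ∈ T, the image of r in G_Z is trivial if and only if r ∈ Z. Then there exists an uncountable collection 𝒵 of subsets of T such that for any two distinct Z, Z' ∈ 𝒵 the groups G_Z and G_{Z'} are not isomorphic; in particular the groups G_Z fall into uncountably many isomorphism classes. -/

import Mathlib

/-- Given a fixed set `A` of relators and a subset `Z` of an auxiliary set `T` of relators,
`GZ A Z` is the presented group `⟨x₁,…,xₙ | A ∪ Z⟩`. -/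
abbrev GZ {n : ℕ} (A Z : Set (FreeGroup (Fin n))) : Type :=
  PresentedGroup (A ∪ Z)

/-!
A finitely generated group `G` has only countably many homomorphisms into a countable group `H`, so
only countably many normal subgroups `N` of `G` satisfy `G ⧸ N ≃* H`: each is the kernel of such a
homomorphism. The hypothesis lets one recover `Z` from the normal closure of `A ∪ Z` by intersecting
with `T`, so the uncountably many subsets `Z` of `T` give distinct normal subgroups. Isomorphism of
the quotients thus has countable classes on an uncountable set, and a transversal is uncountable.
-/

section Countability

variable {α β : Type*}

theorem not_countable_powerset {s : Set α} (hs : s.Infinite) : ¬ (𝒫 s).Countable := by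
  rw [← Cardinal.le_aleph0_iff_set_countable, Cardinal.mk_powerset, not_le]
  exact (Cardinal.infinite_iff.mp hs.to_subtype).trans_lt (Cardinal.cantor _)

theorem countable_of_countable_image_of_countable_fibers {f : α → β} {s : Set α}
    (himage : (f '' s).Countable) (hfibers : ∀ b ∈ f '' s, (s ∩ f ⁻¹' {b}).Countable) :
    s.Countable := by
  have hcover : s ⊆ ⋃ b ∈ f '' s, s ∩ f ⁻¹' {b} := fun a ha ↦
    Set.mem_biUnion (Set.mem_image_of_mem f ha) ⟨ha, rfl⟩
  exact (himage.biUnion hfibers).mono hcover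

theorem exists_not_countable_subset_pairwise_not_rel (r : Setoid α) {s : Set α}
    (hs : ¬ s.Countable) (hr : ∀ a ∈ s, {b ∈ s | r b a}.Countable) :
    ∃ t ⊆ s, ¬ t.Countable ∧ t.Pairwise fun a b ↦ ¬ r a b := by
  obtain ⟨t, hts, ht⟩ := Set.exists_subset_bijOn s (Quotient.mk r)
  have hpair : t.Pairwise fun a b ↦ ¬ r a b := fun a ha b hb hab hrab ↦
    hab (ht.injOn ha hb (Quotient.sound hrab))
  refine ⟨t, hts, fun htc ↦ hs ?_, hpair⟩
  have himage : (Quotient.mk r '' s).Countable := ht.image_eq ▸ htc.image _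
  refine countable_of_countable_image_of_countable_fibers himage ?_
  rintro _ ⟨a, ha, rfl⟩
  have hclass : s ∩ Quotient.mk r ⁻¹' {Quotient.mk r a} ⊆ {b ∈ s | r b a} :=
    fun _ ⟨hbs, hba⟩ ↦ ⟨hbs, Quotient.exact hba⟩
  exact (hr a ha).mono hclass

end Countability

section FinitelyGenerated

variable {G : Type*} [Group G] [Group.FG G]

variable (G) in
theorem countable_of_group_fg : Countable G := by
  obtain ⟨S, hfin, f, hf⟩ := Group.fg_iff_exists_freeGroup_hom_surjective.mp ‹Group.FG G›
  have : Finite S := hfin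
  have : Countable (FreeGroup S) := Quot.mk_surjective.countable
  exact hf.countable

variable (G) in
theorem countable_monoidHom_of_group_fg (H : Type*) [Monoid H] [Countable H] :
    Countable (G →* H) := by
  obtain ⟨S, hS, hfin⟩ := Group.fg_iff.mp ‹Group.FG G›
  have : Finite S := hfin
  have hinj : Function.Injective fun (f : G →* H) (x : S) ↦ f x := fun f g hfg ↦
    MonoidHom.eq_of_eqOn_dense hS fun x hx ↦ congrFun hfg ⟨x, hx⟩
  exact hinj.countable

variable {ι : Type*} {N : ι → Subgroup G} [∀ i, (N i).Normal] {s : Set ι}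

theorem countable_setOf_quotient_mulEquiv (hN : s.InjOn N) (H : Type*) [Group H] [Countable H] :
    {i ∈ s | Nonempty (G ⧸ N i ≃* H)}.Countable := by
  have := countable_monoidHom_of_group_fg G H
  have hker : Set.MapsTo N {i ∈ s | Nonempty (G ⧸ N i ≃* H)}
      (Set.range (MonoidHom.ker : (G →* H) → Subgroup G)) := by
    rintro i ⟨-, ⟨e⟩⟩
    exact ⟨(e : G ⧸ N i →* H).comp (QuotientGroup.mk' (N i)), by
      rw [MonoidHom.ker_mulEquiv_comp, QuotientGroup.ker_mk']⟩
  exact hker.countable_of_injOn (hN.mono (Set.sep_subset _ _)) (Set.countable_range _)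

theorem exists_not_countable_subset_pairwise_not_quotient_mulEquiv (hN : s.InjOn N)
    (hs : ¬ s.Countable) :
    ∃ t ⊆ s, ¬ t.Countable ∧ t.Pairwise fun i j ↦ ¬ Nonempty (G ⧸ N i ≃* G ⧸ N j) := by
  let isoSetoid : Setoid ι :=
    { r i j := Nonempty (G ⧸ N i ≃* G ⧸ N j)
      iseqv := ⟨fun _ ↦ ⟨.refl _⟩, fun ⟨e⟩ ↦ ⟨e.symm⟩, fun ⟨e⟩ ⟨f⟩ ↦ ⟨e.trans f⟩⟩ }
  exact exists_not_countable_subset_pairwise_not_rel isoSetoid hs fun i _ ↦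
    have := countable_of_group_fg (G ⧸ N i)
    countable_setOf_quotient_mulEquiv hN (G ⧸ N i)

end FinitelyGenerated

theorem injOn_normalClosure_union {G : Type*} [Group G] {A T : Set G}
    (h : ∀ Z ⊆ T, ∀ r ∈ T, r ∈ Subgroup.normalClosure (A ∪ Z) → r ∈ Z) :
    (𝒫 T).InjOn fun Z ↦ Subgroup.normalClosure (A ∪ Z) := by
  have hleft : Set.LeftInvOn (fun N : Subgroup G ↦ T ∩ N)
      (fun Z ↦ Subgroup.normalClosure (A ∪ Z)) (𝒫 T) := fun Z hZ ↦
    Set.Subset.antisymm (fun r hr ↦ h Z hZ r hr.1 hr.2) fun r hr ↦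
      ⟨hZ hr, Subgroup.subset_normalClosure (Or.inr hr)⟩
  exact hleft.injOn

theorem uncountably_many_nonisomorphic_GZ_general {G : Type*} [Group G] [Group.FG G]
    {A T : Set G} (hT : T.Infinite)
    (h : ∀ Z ⊆ T, ∀ r ∈ T, r ∈ Subgroup.normalClosure (A ∪ Z) → r ∈ Z) :
    ∃ 𝒵 ⊆ 𝒫 T, ¬ 𝒵.Countable ∧ 𝒵.Pairwise fun Z Z' ↦
      ¬ Nonempty (G ⧸ Subgroup.normalClosure (A ∪ Z) ≃* G ⧸ Subgroup.normalClosure (A ∪ Z')) :=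
  exists_not_countable_subset_pairwise_not_quotient_mulEquiv (injOn_normalClosure_union h)
    (not_countable_powerset hT)

/-- **Uncountably many isomorphism classes among the `G_Z`.** If `T` is infinite and for
every `Z ⊆ T` a relator `r ∈ T` dies in `G_Z = ⟨x₁,…,xₙ | A ∪ Z⟩` exactly when `r ∈ Z`,
then there is an uncountable collection `𝒵` of subsets of `T` whose associated groups
`G_Z` are pairwise non-isomorphic. -/
theorem uncountably_many_nonisomorphic_GZ (n : ℕ) (A T : Set (FreeGroup (Fin n)))
    (hT : T.Infinite)
    (h : ∀ Z ⊆ T, ∀ r ∈ T, PresentedGroup.mk (A ∪ Z) r = 1 ↔ r ∈ Z) :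
    ∃ 𝒵 : Set (Set (FreeGroup (Fin n))),
      ¬ 𝒵.Countable ∧
      (∀ Z ∈ 𝒵, Z ⊆ T) ∧
      (∀ Z ∈ 𝒵, ∀ Z' ∈ 𝒵, Z ≠ Z' → ¬ Nonempty (GZ A Z ≃* GZ A Z')) := by
  obtain ⟨𝒵, hsub, hunc, hpair⟩ := uncountably_many_nonisomorphic_GZ_general hT
    fun Z hZ r hr hmem ↦ (h Z hZ r hr).mp (PresentedGroup.mk_eq_one_iff.mpr hmem)
  exact ⟨𝒵, hunc, hsub, fun Z hZ Z' hZ' hne ↦ hpair hZ hZ' hne⟩
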